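/- Let Z and Y be finite nonempty sets, T a label transition matrix from Z to Y, R a reconstruction matrix of T, F : C → ℝ a closed convex function on a closed convex subset C of 1_Z^⊥, let α > 1 be a real number and k > 0. Define F'(v) = F(v) + (k/2) Σ_{z∈Z} |v_z|^α for v ∈ C. Then F' is a closed convex function, the function v ↦ F'(v) − max_{y∈Y}(R^⊤ v)_y is bounded from below on C, and the weak-label loss l_W(q, y) = −(R^⊤ ∇F'*(q))_y + F'(∇F'*(q)), where ∇F'* is any subgradient selection of the convex conjugate F'*, is T-proper and bounded from below on P(Z) × Y. -/

import Mathlib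

/-!
The power penalty `(k/2) Σ_z |v_z|^α` is continuous and convex, so adding it to `F` preserves
convexity and closedness of the epigraph.

Separating a point below the graph from the closed convex epigraph gives, at every `u ∈ C` and
every `t < F u`, an affine minorant of `F` exceeding `t` at `u` (`exists_affine_minorant`).
This is used twice.

* Since `α > 1`, the penalty dominates every linear form up to a constant (`linear_add_power_bdd`).
  Hence the penalty compensates both an affine minorant of `F` and any column of `R`, which
  bounds `F' v - (R^⊤ v)_y` below on `C`, uniformly in `y`; boundedness of the loss follows.
* A subgradient `u ∈ C` of the conjugate at `p` maximizes `⟨p, ·⟩ - F'` over `C`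
  (`conjSubgrad_isMax`): otherwise an affine minorant of `F'` with slope `a` violates the
  subgradient inequality at `a`.

As `R T = 1` and `T p` is a probability vector, the expected weak loss of `q` under `T p`
is `-(⟨p, g q⟩ - F' (g q))`, so `T`-properness is exactly the maximality of `g p`.
-/


open scoped BigOperators
noncomputable section

/-- The probability simplex over a finite label set `Z`. -/
def Simplex (Z : Type*) [Fintype Z] : Set (Z → ℝ) :=
  {p | ∑ z, p z = 1 ∧ ∀ z, 0 ≤ p z}

/-- The hyperplane `1_Z^⊥ = {v : Σ_z v_z = 0}`. -/
def SumZero (Z : Type*) [Fintype Z] : Set (Z → ℝ) :=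
  {v | ∑ z, v z = 0}

/-- A loss `l : P(Z) × Z → ℝ̄` is proper. -/
def Proper {Z : Type*} [Fintype Z] (l : (Z → ℝ) → Z → EReal) : Prop :=
  ∀ p ∈ Simplex Z, ∀ q ∈ Simplex Z,
    ∑ z, (p z : EReal) * l p z ≤ ∑ z, (p z : EReal) * l q z

/-- A loss is strictly proper. -/
def StrictlyProper {Z : Type*} [Fintype Z] (l : (Z → ℝ) → Z → EReal) : Prop :=
  Proper l ∧ ∀ p ∈ Simplex Z, ∀ q ∈ Simplex Z,
    ∑ z, (p z : EReal) * l p z = ∑ z, (p z : EReal) * l q z → p = q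

/-- A loss is regular: finite everywhere except possibly `+∞` when `q z = 0`. -/
def Regular {Z : Type*} [Fintype Z] (l : (Z → ℝ) → Z → EReal) : Prop :=
  ∀ q ∈ Simplex Z, ∀ z, l q z ≠ ⊥ ∧ (l q z = ⊤ → q z = 0)

/-- A label transition matrix: nonnegative entries, columns summing to 1. -/
def TransitionMatrix {Z Y : Type*} [Fintype Z] [Fintype Y] (T : Matrix Y Z ℝ) : Prop :=
  (∀ y z, 0 ≤ T y z) ∧ ∀ z, ∑ y, T y z = 1

/-- A weak-label loss is `T`-proper. -/
def TProper {Z Y : Type*} [Fintype Z] [Fintype Y] (T : Matrix Y Z ℝ)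
    (lW : (Z → ℝ) → Y → EReal) : Prop :=
  ∀ p ∈ Simplex Z, ∀ q ∈ Simplex Z,
    ∑ y, ((T.mulVec p y : ℝ) : EReal) * lW p y ≤
      ∑ y, ((T.mulVec p y : ℝ) : EReal) * lW q y

/-- `F` is a closed convex function on `C`: convex on `C` with closed epigraph. -/
def ClosedConvexOn {Z : Type*} [Fintype Z] (C : Set (Z → ℝ)) (F : (Z → ℝ) → ℝ) : Prop :=
  ConvexOn ℝ C F ∧ IsClosed {x : (Z → ℝ) × ℝ | x.1 ∈ C ∧ F x.1 ≤ x.2}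

/-- The convex conjugate `F*(p) = sup_{v ∈ C} [⟨p, v⟩ − F(v)]`, with values in `ℝ̄`. -/
def conj {Z : Type*} [Fintype Z] (C : Set (Z → ℝ)) (F : (Z → ℝ) → ℝ)
    (p : Z → ℝ) : EReal :=
  ⨆ v : C, (((∑ z, p z * (v : Z → ℝ) z) - F (v : Z → ℝ) : ℝ) : EReal)

/-- `u` is a subgradient of the convex conjugate `F*` at `p`. -/
def ConjSubgradAt {Z : Type*} [Fintype Z] (C : Set (Z → ℝ)) (F : (Z → ℝ) → ℝ)
    (p : Z → ℝ) (u : Z → ℝ) : Prop :=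
  ∀ p' : Z → ℝ,
    conj C F p + ((∑ z, u z * (p' z - p z) : ℝ) : EReal) ≤ conj C F p'

/-- A closed convex function has, at each point of its domain, affine minorants with values
arbitrarily close to the function value. -/
lemma exists_affine_minorant {Z : Type*} [Fintype Z] {C : Set (Z → ℝ)} {F : (Z → ℝ) → ℝ}
    (hF : ClosedConvexOn C F) {u : Z → ℝ} (hu : u ∈ C) {t : ℝ} (ht : t < F u) :
    ∃ (a : Z → ℝ) (s : ℝ), t < (∑ z, a z * u z) + s ∧
      ∀ v ∈ C, (∑ z, a z * v z) + s ≤ F v := by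
  classical
  obtain ⟨f, s, h1, h2⟩ := geometric_hahn_banach_point_closed hF.1.convex_epigraph hF.2
    (x := (u, t)) (fun h => absurd h.2 (not_le.mpr ht))
  have hf : ∀ (v : Z → ℝ) (r : ℝ),
      f (v, r) = (∑ z, f (Pi.single z 1, 0) * v z) + r * f (0, 1) := by
    intro v r
    have e1 : ((v, r) : (Z → ℝ) × ℝ)
        = (∑ z, v z • ((Pi.single z 1, 0) : (Z → ℝ) × ℝ)) + r • ((0, 1) : (Z → ℝ) × ℝ) := by
      refine Prod.ext ?_ ?_
      · ext w
        simp [Prod.fst_sum, Finset.sum_apply, Pi.single_apply]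
      · simp [Prod.snd_sum]
    rw [e1, map_add, map_sum, map_smul]
    simp only [map_smul, smul_eq_mul]
    congr 1
    exact Finset.sum_congr rfl fun z _ => mul_comm _ _
  set β := f (0, 1) with hβ
  have h3 := h2 (u, F u) ⟨hu, le_rfl⟩
  rw [hf] at h1 h3
  -- The separating functional is not vertical because `u` lies in the domain.
  have hβ0 : 0 < β := by
    by_contra hneg
    have : (F u - t) * β ≤ 0 :=
      mul_nonpos_of_nonneg_of_nonpos (by linarith) (not_lt.mp hneg)
    nlinarith
  have hsum : ∀ v : Z → ℝ, (∑ z, (-(f (Pi.single z 1, 0)) / β) * v z)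
      = -(∑ z, f (Pi.single z 1, 0) * v z) / β := by
    intro v
    rw [← Finset.sum_neg_distrib, Finset.sum_div]
    exact Finset.sum_congr rfl fun z _ => by ring
  refine ⟨fun z => -(f (Pi.single z 1, 0)) / β, s / β, ?_, ?_⟩
  · rw [hsum, ← add_div, lt_div_iff₀ hβ0]
    linarith
  · intro v hv
    have h4 := h2 (v, F v) ⟨hv, le_rfl⟩
    rw [hf] at h4
    rw [hsum, ← add_div, div_le_iff₀ hβ0]
    linarith

/-- In one variable, a power `|x|^α` with `α > 1` dominates every linear term up to a constant. -/
lemma linear_add_power_bdd_real {α k : ℝ} (hα : 1 < α) (hk : 0 < k) (c : ℝ) :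
    ∃ b : ℝ, ∀ x : ℝ, b ≤ c * x + k / 2 * |x| ^ α := by
  -- Beyond the threshold `(2|c|/k)^(1/(α-1))` the power term exceeds `|c x|`.
  set M := (2 * |c| / k) ^ (1 / (α - 1)) with hM
  have hα' : 0 < α - 1 := by linarith
  have hM0 : 0 ≤ M := by positivity
  refine ⟨-(|c| * M), fun x => ?_⟩
  have hcx : -(|c| * |x|) ≤ c * x := by
    rw [← abs_mul]; exact neg_abs_le _
  rcases le_total |x| M with h | h
  · have h1 : |c| * |x| ≤ |c| * M := by gcongr
    have h2 : 0 ≤ k / 2 * |x| ^ α := by positivity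
    linarith
  · have h1 : 2 * |c| / k ≤ |x| ^ (α - 1) := by
      calc 2 * |c| / k = M ^ (α - 1) := by
            rw [hM, ← Real.rpow_mul (by positivity), one_div_mul_cancel hα'.ne', Real.rpow_one]
        _ ≤ |x| ^ (α - 1) := Real.rpow_le_rpow hM0 h hα'.le
    have h2 : |x| ^ α = |x| ^ (α - 1) * |x| := by
      rw [← Real.rpow_add_one' (abs_nonneg x) (by linarith), sub_add_cancel]
    have h3 : |c| ≤ k / 2 * |x| ^ (α - 1) := by
      rw [div_le_iff₀ hk] at h1
      linarith
    have h4 : |c| * |x| ≤ k / 2 * |x| ^ (α - 1) * |x| := by gcongr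
    have h5 : 0 ≤ |c| * M := by positivity
    rw [h2]
    linarith

lemma linear_add_power_bdd {Z : Type*} [Fintype Z] {α k : ℝ} (hα : 1 < α) (hk : 0 < k)
    (c : Z → ℝ) :
    ∃ b : ℝ, ∀ v : Z → ℝ, b ≤ (∑ z, c z * v z) + k / 2 * ∑ z, |v z| ^ α := by
  choose b hb using fun z => linear_add_power_bdd_real hα hk (c z)
  refine ⟨∑ z, b z, fun v => ?_⟩
  rw [Finset.mul_sum, ← Finset.sum_add_distrib]
  exact Finset.sum_le_sum fun z _ => hb z (v z)

/-- A subgradient `u ∈ C` of the conjugate `G*` at `p` attains the supremum defining `G* p`. -/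
lemma conjSubgrad_isMax {Z : Type*} [Fintype Z] {C : Set (Z → ℝ)} {G : (Z → ℝ) → ℝ}
    (hG : ClosedConvexOn C G) {p u : Z → ℝ} (hu : u ∈ C) (hsub : ConjSubgradAt C G p u)
    {w : Z → ℝ} (hw : w ∈ C) :
    (∑ z, p z * w z) - G w ≤ (∑ z, p z * u z) - G u := by
  by_contra! hlt
  -- A minorant exceeding this height at `u` has an intercept too large for the subgradient
  -- inequality at its slope.
  obtain ⟨a, s, h1, h2⟩ := exists_affine_minorant hG hu
    (t := (∑ z, p z * u z) - ((∑ z, p z * w z) - G w)) (by linarith)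
  have hp : (((∑ z, p z * w z) - G w : ℝ) : EReal) ≤ conj C G p :=
    le_iSup (fun v : C => (((∑ z, p z * (v : Z → ℝ) z) - G (v : Z → ℝ) : ℝ) : EReal)) ⟨w, hw⟩
  have ha : conj C G a ≤ ((-s : ℝ) : EReal) := by
    refine iSup_le fun v => EReal.coe_le_coe_iff.mpr ?_
    have := h2 v v.2
    linarith
  have h3 := ((add_le_add_left hp _).trans (hsub a)).trans ha
  rw [← EReal.coe_add, EReal.coe_le_coe_iff] at h3
  have h4 : ∑ z, u z * (a z - p z) = (∑ z, a z * u z) - ∑ z, p z * u z := by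
    rw [← Finset.sum_sub_distrib]
    exact Finset.sum_congr rfl fun z _ => by ring
  linarith

lemma closedConvexOn_add_power {Z : Type*} [Fintype Z] {C : Set (Z → ℝ)} {F : (Z → ℝ) → ℝ}
    (hF : ClosedConvexOn C F) {α k : ℝ} (hα : 1 < α) (hk : 0 < k) :
    ClosedConvexOn C (fun v => F v + k / 2 * ∑ z, |v z| ^ α) := by
  constructor
  · refine hF.1.add ⟨hF.1.1, fun x _ y _ a b ha hb hab => ?_⟩
    have key : ∀ z, |(a • x + b • y) z| ^ α ≤ a * |x z| ^ α + b * |y z| ^ α := by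
      intro z
      have h1 : |(a • x + b • y) z| ≤ a * |x z| + b * |y z| := by
        simpa [abs_mul, abs_of_nonneg ha, abs_of_nonneg hb] using abs_add_le (a * x z) (b * y z)
      have h2 := (convexOn_rpow hα.le).2 (abs_nonneg (x z)) (abs_nonneg (y z)) ha hb hab
      exact (Real.rpow_le_rpow (abs_nonneg _) h1 (by linarith)).trans h2
    have h3 := Finset.sum_le_sum fun z (_ : z ∈ Finset.univ) => key z
    rw [Finset.sum_add_distrib, ← Finset.mul_sum, ← Finset.mul_sum] at h3
    have h4 := mul_le_mul_of_nonneg_left h3 (by positivity : 0 ≤ k / 2)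
    simp only [smul_eq_mul] at h4 ⊢
    linarith
  · have hcont : Continuous (fun x : (Z → ℝ) × ℝ =>
        ((x.1, x.2 - k / 2 * ∑ z, |x.1 z| ^ α) : (Z → ℝ) × ℝ)) := by
      refine continuous_fst.prodMk (continuous_snd.sub (continuous_const.mul
        (continuous_finsetSum _ fun z _ => Continuous.rpow_const (by fun_prop) ?_)))
      exact fun _ => Or.inr (by linarith)
    convert hF.2.preimage hcont using 1
    ext x
    simp only [Set.mem_ofPred_eq, Set.mem_preimage, le_sub_iff_add_le]

/-- The expectation of the weak-label loss under `T p`, computed from `R T = 1`. -/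
lemma expected_weak_loss {Z Y : Type*} [Fintype Z] [Fintype Y] [DecidableEq Z]
    {T : Matrix Y Z ℝ} (hT : TransitionMatrix T) {R : Matrix Z Y ℝ} (hR : R * T = 1)
    {p : Z → ℝ} (hp : p ∈ Simplex Z) (u : Z → ℝ) (c : ℝ) :
    ∑ y, T.mulVec p y * (-(∑ z, R z y * u z) + c) = c - ∑ z, p z * u z := by
  have h1 : ∑ y, T.mulVec p y = 1 := by
    simp only [Matrix.mulVec, dotProduct]
    rw [Finset.sum_comm]
    simp only [← Finset.sum_mul, hT.2, one_mul]
    exact hp.1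
  have h2 : ∀ z, ∑ y, R z y * T.mulVec p y = p z := by
    intro z
    have : R.mulVec (T.mulVec p) = p := by rw [Matrix.mulVec_mulVec, hR, Matrix.one_mulVec]
    exact congrFun this z
  have h3 : ∑ y, T.mulVec p y * ∑ z, R z y * u z = ∑ z, p z * u z := by
    simp only [Finset.mul_sum]
    rw [Finset.sum_comm]
    refine Finset.sum_congr rfl fun z _ => ?_
    rw [← h2 z, Finset.sum_mul]
    exact Finset.sum_congr rfl fun y _ => by ring
  simp only [mul_add, mul_neg, Finset.sum_add_distrib, Finset.sum_neg_distrib]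
  rw [h3, ← Finset.sum_mul, h1]
  ring

/-- **Corollary (generalized logit squeezing)**: for `α > 1` and `k > 0`, the function
`F'(v) = F(v) + (k/2) Σ_z |v_z|^α` is closed convex, `F'(v) − max_y (R^⊤ v)_y` is
bounded below on `C`, and the associated weak-label loss
`l_W(q,y) = −(R^⊤ ∇F'*(q))_y + F'(∇F'*(q))` is `T`-proper and bounded from below. -/
theorem generalized_logit_squeezing {Z Y : Type*} [Fintype Z] [Fintype Y]
    [Nonempty Z] [Nonempty Y] [DecidableEq Z]
    (T : Matrix Y Z ℝ) (hT : TransitionMatrix T)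
    (R : Matrix Z Y ℝ) (hR : R * T = 1)
    (C : Set (Z → ℝ)) (hCsub : C ⊆ SumZero Z) (hCconv : Convex ℝ C)
    (hCclosed : IsClosed C)
    (F : (Z → ℝ) → ℝ) (hF : ClosedConvexOn C F)
    (α : ℝ) (hα : 1 < α) (k : ℝ) (hk : 0 < k)
    (F' : (Z → ℝ) → ℝ) (hF' : ∀ v, F' v = F v + (k / 2) * ∑ z, |v z| ^ α)
    (g : (Z → ℝ) → (Z → ℝ))
    (hg : ∀ q ∈ Simplex Z, g q ∈ C ∧ ConjSubgradAt C F' q (g q)) :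
    ClosedConvexOn C F' ∧
    BddBelow ((fun v => F' v - ⨆ y, ∑ z, R z y * v z) '' C) ∧
    TProper T (fun q y => ((-(∑ z, R z y * g q z) + F' (g q) : ℝ) : EReal)) ∧
    ∃ b : ℝ, ∀ q ∈ Simplex Z, ∀ y : Y, b ≤ -(∑ z, R z y * g q z) + F' (g q) := by
  have hFF : F' = fun v => F v + (k / 2) * ∑ z, |v z| ^ α := funext hF'
  have hcc : ClosedConvexOn C F' := hFF ▸ closedConvexOn_add_power hF hα hk
  -- A lower bound for `F' v - (R^⊤ v)_y` that is uniform in `v ∈ C` and `y`.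
  have hbd : ∃ b : ℝ, ∀ v ∈ C, ∀ y : Y, b ≤ -(∑ z, R z y * v z) + F' v := by
    rcases C.eq_empty_or_nonempty with rfl | ⟨u, hu⟩
    · exact ⟨0, fun v hv => absurd hv (Set.notMem_empty v)⟩
    obtain ⟨a, s, -, ha⟩ := exists_affine_minorant hF hu (sub_one_lt (F u))
    choose b hb using fun y => linear_add_power_bdd hα hk (fun z => a z - R z y)
    obtain ⟨y₀, hy₀⟩ := Finite.exists_min b
    refine ⟨b y₀ + s, fun v hv y => ?_⟩
    have h1 := hb y v
    simp only [sub_mul, Finset.sum_sub_distrib] at h1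
    rw [hF' v]
    linarith [ha v hv, hy₀ y]
  obtain ⟨b, hb⟩ := hbd
  refine ⟨hcc, ⟨b, ?_⟩, ?_, b, fun q hq y => hb _ (hg q hq).1 y⟩
  · rintro _ ⟨v, hv, rfl⟩
    obtain ⟨y, hy⟩ := exists_eq_ciSup_of_finite (f := fun y => ∑ z, R z y * v z)
    change b ≤ F' v - ⨆ y, ∑ z, R z y * v z
    rw [← hy]
    linarith [hb v hv y]
  · intro p hp q hq
    have h := conjSubgrad_isMax hcc (hg p hp).1 (hg p hp).2 (hg q hq).1
    have hsum : ∀ f : Y → ℝ, ∑ y, (f y : EReal) = ((∑ y, f y : ℝ) : EReal) := fun f =>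
      (map_sum (⟨⟨fun r : ℝ => (r : EReal), EReal.coe_zero⟩, EReal.coe_add⟩ : ℝ →+ EReal)
        f Finset.univ).symm
    simp only [← EReal.coe_mul, hsum, EReal.coe_le_coe_iff]
    rw [expected_weak_loss hT hR hp, expected_weak_loss hT hR hp]
    linarith
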